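/- Let p be a positive integer that is a perfect square, i.e. √p is an integer. Then there exists a strictly isomorphic rectangle partition pair for (p, p+1) of size 2·√p + 2. -/

import Mathlib

open scoped Classical

/-- An axis-parallel rectangle in the plane, given by its coordinates. -/
structure Rect where
  x1 : ℝ
  x2 : ℝ
  y1 : ℝ
  y2 : ℝ

namespace Rect

/-- The horizontal side length. -/
def width (r : Rect) : ℝ := r.x2 - r.x1

/-- The vertical side length. -/
def height (r : Rect) : ℝ := r.y2 - r.y1

/-- The closed rectangle as a set of points. -/
def carrier (r : Rect) : Set (ℝ × ℝ) := Set.Icc r.x1 r.x2 ×ˢ Set.Icc r.y1 r.y2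

/-- The interior of the rectangle. -/
def inner (r : Rect) : Set (ℝ × ℝ) := Set.Ioo r.x1 r.x2 ×ˢ Set.Ioo r.y1 r.y2

/-- The rectangle is nondegenerate. -/
def Nondeg (r : Rect) : Prop := r.x1 < r.x2 ∧ r.y1 < r.y2

end Rect

/-- `P` is a rectangle partition of `[0, W] × [0, H]`: finitely many nondegenerate
rectangles with pairwise disjoint interiors whose union is `[0, W] × [0, H]`. -/
def IsRectPartition {k : ℕ} (W H : ℝ) (P : Fin k → Rect) : Prop :=
  (∀ i, (P i).Nondeg) ∧
  (∀ i j : Fin k, i ≠ j → (P i).inner ∩ (P j).inner = ∅) ∧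
  (⋃ i, (P i).carrier) = Set.Icc (0 : ℝ) W ×ˢ Set.Icc (0 : ℝ) H

/-- `P1`, `P2`, `σ` form a strictly isomorphic rectangle partition pair between the
rectangles `a × b` and `c × d`: matched modules have equal width and equal height. -/
def IsStrictIsoPair (a b c d : ℝ) {k : ℕ} (P1 P2 : Fin k → Rect)
    (σ : Equiv.Perm (Fin k)) : Prop :=
  IsRectPartition a b P1 ∧ IsRectPartition c d P2 ∧
  ∀ i, (P1 i).width = (P2 (σ i)).width ∧ (P1 i).height = (P2 (σ i)).height

/-- There is a strictly isomorphic rectangle partition pair between `a × b` and `c × d`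
of size `k`. -/
def StrictPairGen (a b c d : ℝ) (k : ℕ) : Prop :=
  ∃ (P1 P2 : Fin k → Rect) (σ : Equiv.Perm (Fin k)), IsStrictIsoPair a b c d P1 P2 σ

/-- A strictly isomorphic rectangle partition pair for `(p, q)` of size `k`:
partitions of `[0,p] × [0,q]` and `[0,q] × [0,p]` with a matching preserving
widths and heights. -/
def StrictPair (p q : ℝ) (k : ℕ) : Prop := StrictPairGen p q q p k

/-- An isomorphic rectangle partition pair (rotation allowed) between `a × b` and
`c × d` of size `k`: matched modules have the same unordered pair of side lengths. -/
def IsoPairRot (a b c d : ℝ) (k : ℕ) : Prop :=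
  ∃ (P1 P2 : Fin k → Rect) (σ : Equiv.Perm (Fin k)),
    IsRectPartition a b P1 ∧ IsRectPartition c d P2 ∧
    ∀ i, ((P1 i).width = (P2 (σ i)).width ∧ (P1 i).height = (P2 (σ i)).height) ∨
         ((P1 i).width = (P2 (σ i)).height ∧ (P1 i).height = (P2 (σ i)).width)

/-- A slat rectangle partition: if horizontal sides of two modules lie on the same
horizontal line and overlap in more than one point, they are identical segments. -/
def IsSlat {k : ℕ} (P : Fin k → Rect) : Prop :=
  ∀ i j : Fin k, ∀ yi ∈ ({(P i).y1, (P i).y2} : Set ℝ),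
    ∀ yj ∈ ({(P j).y1, (P j).y2} : Set ℝ), yi = yj →
      max (P i).x1 (P j).x1 < min (P i).x2 (P j).x2 →
      (P i).x1 = (P j).x1 ∧ (P i).x2 = (P j).x2

/-!
Put a small box in the corner of a larger one, cut the rest of the larger box into two modules, and
suppose that each of two collections of modules tiles the small box. Whichever collection fills the
small box, the other is free to form a strip along one side of the large box; exchanging the two
collections moves the strip from the top to the right.

For `p = r²` with `r ≥ 2` the large box is the `p × p` square and the small one is `r × r`. It is
tiled by `r` columns `1 × r`, which rearrange into a `1 × p` strip, and equally by `r` rows `r × 1`,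
which rearrange into a `p × 1` strip. For `r = 1` the rest of the square is degenerate, but four
`1 × 1/2` modules tile both `1 × 2` and `2 × 1`.
-/

theorem exists_equiv_of_map_univ_eq {ι κ α : Type*} [Fintype ι] [Fintype κ] {f : ι → α} {g : κ → α}
    (h : Finset.univ.val.map f = Finset.univ.val.map g) : ∃ e : ι ≃ κ, ∀ i, f i = g (e i) := by
  have fiber_equiv : ∀ a, Nonempty ({i // f i = a} ≃ {j // g j = a}) := fun a => by
    have count_eq := congrArg (Multiset.count a) h
    simp only [Multiset.count_map, @eq_comm _ a, ← Finset.filter_val, Finset.card_val,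
      ← Fintype.card_subtype] at count_eq
    exact Fintype.card_eq.mp count_eq
  exact ⟨.ofFiberEquiv fun a => (fiber_equiv a).some, fun i => (Equiv.ofFiberEquiv_map _ i).symm⟩

theorem iUnion_fin_append {α β : Type*} {m n : ℕ} (u : Fin m → α) (v : Fin n → α) (s : α → Set β) :
    ⋃ i, s (Fin.append u v i) = (⋃ i, s (u i)) ∪ ⋃ j, s (v j) := by
  rw [← finSumFinEquiv.surjective.iUnion_comp, Set.iUnion_sum]
  simp

namespace Rect

/-- The pair of side lengths (width, height) of a rectangle. -/
def shape (r : Rect) : ℝ × ℝ := (r.width, r.height)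

/-- The rectangle translated by the vector `v`. -/
def translate (v : ℝ × ℝ) (r : Rect) : Rect := ⟨r.x1 + v.1, r.x2 + v.1, r.y1 + v.2, r.y2 + v.2⟩

/-- The rectangle reflected in the diagonal, which exchanges the two axes. -/
def transpose (r : Rect) : Rect := ⟨r.y1, r.y2, r.x1, r.x2⟩

variable (r : Rect) (v : ℝ × ℝ)

theorem interior_carrier : interior r.carrier = r.inner := by
  simp only [carrier, inner, interior_prod_eq, interior_Icc]

theorem shape_translate : (r.translate v).shape = r.shape := by
  simp [shape, translate, width, height]

theorem carrier_translate : (r.translate v).carrier = (· - v) ⁻¹' r.carrier := by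
  ext z
  simp only [carrier, translate, Set.mem_preimage, Set.mem_prod, Set.mem_Icc, Prod.fst_sub,
    Prod.snd_sub, le_sub_iff_add_le, sub_le_iff_le_add]

theorem inner_translate : (r.translate v).inner = (· - v) ⁻¹' r.inner := by
  ext z
  simp [inner, translate, lt_sub_iff_add_lt, sub_lt_iff_lt_add]

variable {r} in
theorem Nondeg.translate (hr : r.Nondeg) : (r.translate v).Nondeg :=
  ⟨add_lt_add_left hr.1 v.1, add_lt_add_left hr.2 v.2⟩

theorem shape_transpose : r.transpose.shape = r.shape.swap := rfl

theorem carrier_transpose : r.transpose.carrier = Prod.swap ⁻¹' r.carrier :=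
  (Set.preimage_swap_prod ..).symm

theorem inner_transpose : r.transpose.inner = Prod.swap ⁻¹' r.inner :=
  (Set.preimage_swap_prod ..).symm

end Rect

namespace IsRectPartition

variable {k l : ℕ} {W H W₁ W₂ : ℝ} {P : Fin k → Rect} {Q : Fin l → Rect}

theorem single (hW : 0 < W) (hH : 0 < H) : IsRectPartition W H fun _ : Fin 1 => ⟨0, W, 0, H⟩ :=
  ⟨fun _ => ⟨hW, hH⟩, fun i j hij => absurd (Subsingleton.elim i j) hij, Set.iUnion_const _⟩

theorem inner_subset (hP : IsRectPartition W H P) (i : Fin k) :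
    (P i).inner ⊆ Set.Ioo 0 W ×ˢ Set.Ioo 0 H := by
  have carrier_subset : (P i).carrier ⊆ Set.Icc 0 W ×ˢ Set.Icc 0 H :=
    hP.2.2 ▸ Set.subset_iUnion (fun i => (P i).carrier) i
  simpa only [Rect.interior_carrier, interior_prod_eq, interior_Icc] using
    interior_mono carrier_subset

theorem transpose (hP : IsRectPartition W H P) :
    IsRectPartition H W fun i => (P i).transpose := by
  refine ⟨fun i => (hP.1 i).symm, fun i j hij => ?_, ?_⟩
  · rw [Rect.inner_transpose, Rect.inner_transpose, ← Set.preimage_inter, hP.2.1 i j hij,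
      Set.preimage_empty]
  · simp_rw [Rect.carrier_transpose]
    rw [← Set.preimage_iUnion, hP.2.2, Set.preimage_swap_prod]

theorem iUnion_carrier_translate (hP : IsRectPartition W H P) (v : ℝ × ℝ) :
    ⋃ i, ((P i).translate v).carrier = Set.Icc v.1 (W + v.1) ×ˢ Set.Icc v.2 (H + v.2) := by
  simp_rw [Rect.carrier_translate]
  rw [← Set.preimage_iUnion, hP.2.2]
  simpa [Rect.carrier, Rect.translate] using (Rect.carrier_translate ⟨0, W, 0, H⟩ v).symm

theorem inner_translate_inter_eq_empty (hP : IsRectPartition W H P) (v : ℝ × ℝ) {i j : Fin k}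
    (hij : i ≠ j) : ((P i).translate v).inner ∩ ((P j).translate v).inner = ∅ := by
  rw [Rect.inner_translate, Rect.inner_translate, ← Set.preimage_inter, hP.2.1 i j hij,
    Set.preimage_empty]

theorem inner_inter_inner_translate_eq_empty (hP : IsRectPartition W₁ H P)
    (hQ : IsRectPartition W₂ H Q) (i : Fin k) (j : Fin l) :
    (P i).inner ∩ ((Q j).translate (W₁, 0)).inner = ∅ := by
  rw [Rect.inner_translate]
  refine Set.eq_empty_of_forall_notMem fun z ⟨hzP, hzQ⟩ => ?_
  have left_of_line : z.1 < W₁ := (hP.inner_subset i hzP).1.2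
  have right_of_line : 0 < z.1 - W₁ := (hQ.inner_subset j hzQ).1.1
  linarith

theorem beside (hP : IsRectPartition W₁ H P) (hQ : IsRectPartition W₂ H Q) (hW₁ : 0 ≤ W₁)
    (hW₂ : 0 ≤ W₂) :
    IsRectPartition (W₁ + W₂) H (Fin.append P fun j => (Q j).translate (W₁, 0)) := by
  refine ⟨?_, ?_, ?_⟩
  · simpa [Fin.forall_fin_add] using And.intro hP.1 fun j => (hQ.1 j).translate (W₁, 0)
  · have cross := hP.inner_inter_inner_translate_eq_empty hQ
    simp only [Fin.forall_fin_add, Fin.append_left, Fin.append_right]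
    exact ⟨fun i => ⟨fun j hij => hP.2.1 i j (by simpa using hij), fun j _ => cross i j⟩,
      fun i => ⟨fun j _ => Set.inter_comm _ _ ▸ cross j i,
        fun j hij => hQ.inner_translate_inter_eq_empty _ (by simpa using hij)⟩⟩
  · rw [iUnion_fin_append, hP.2.2, hQ.iUnion_carrier_translate, add_zero, ← Set.union_prod,
      Set.Icc_union_Icc_eq_Icc hW₁ (by linarith), add_comm W₂]

end IsRectPartition

/-- The nondegenerate box `[0, W] × [0, H]` has a rectangle partition whose modules have exactly the
shapes (width, height) listed in `S`, with multiplicity. Positions are forgotten, so that a strictly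
isomorphic pair amounts to two boxes tiled by the same `S`. -/
def HasTiling (W H : ℝ) (S : Multiset (ℝ × ℝ)) : Prop :=
  0 < W ∧ 0 < H ∧ ∃ (k : ℕ) (P : Fin k → Rect),
    IsRectPartition W H P ∧ Finset.univ.val.map (fun i => (P i).shape) = S

namespace HasTiling

variable {W H W₁ W₂ H₁ H₂ : ℝ} {S T : Multiset (ℝ × ℝ)}

theorem strictPairGen {a b c d : ℝ} (hab : HasTiling a b S) (hcd : HasTiling c d S) :
    StrictPairGen a b c d S.card := by
  obtain ⟨-, -, k, P, hP, rfl⟩ := hab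
  obtain ⟨-, -, l, Q, hQ, hPQ⟩ := hcd
  obtain rfl : l = k := by simpa using congrArg Multiset.card hPQ
  obtain ⟨σ, hσ⟩ := exists_equiv_of_map_univ_eq hPQ.symm
  rw [Multiset.card_map, Finset.card_val, Finset.card_fin]
  exact ⟨P, Q, σ, hP, hQ, fun i => Prod.ext_iff.mp (hσ i)⟩

theorem single (hW : 0 < W) (hH : 0 < H) : HasTiling W H {(W, H)} :=
  ⟨hW, hH, 1, _, .single hW hH, by simp [Rect.shape, Rect.width, Rect.height]⟩

theorem transpose (h : HasTiling W H S) : HasTiling H W (S.map Prod.swap) := by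
  obtain ⟨hW, hH, k, P, hP, rfl⟩ := h
  refine ⟨hH, hW, k, _, hP.transpose, ?_⟩
  simp only [Multiset.map_map, Function.comp_apply, Rect.shape_transpose]

theorem beside (h₁ : HasTiling W₁ H S) (h₂ : HasTiling W₂ H T) :
    HasTiling (W₁ + W₂) H (S + T) := by
  obtain ⟨hW₁, hH, k, P, hP, rfl⟩ := h₁
  obtain ⟨hW₂, -, l, Q, hQ, rfl⟩ := h₂
  refine ⟨add_pos hW₁ hW₂, hH, k + l, _, hP.beside hQ hW₁.le hW₂.le, ?_⟩
  simp [List.ofFn_add, Rect.shape_translate]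

theorem above (h₁ : HasTiling W H₁ S) (h₂ : HasTiling W H₂ T) :
    HasTiling W (H₁ + H₂) (S + T) := by
  simpa using (h₁.transpose.beside h₂.transpose).transpose

theorem nsmul_beside (h : HasTiling W H S) {n : ℕ} (hn : 1 ≤ n) :
    HasTiling (n * W) H (n • S) := by
  induction n, hn using Nat.le_induction with
  | base => simpa using h
  | succ n _ ih => simpa [add_mul, add_smul] using ih.beside h

theorem nsmul_above (h : HasTiling W H S) {n : ℕ} (hn : 1 ≤ n) :
    HasTiling W (n * H) (n • S) := by
  simpa [Multiset.map_nsmul] using (h.transpose.nsmul_beside hn).transpose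

theorem extend_corner {w h : ℝ} (hS : HasTiling w h S) (hw : w < W) (hh : h < H) :
    HasTiling W H (S + {(W - w, h), (W, H - h)}) := by
  have hW : 0 < W := hS.1.trans hw
  have bottom := hS.beside (single (sub_pos.mpr hw) hS.2.1)
  rw [add_sub_cancel] at bottom
  have box := bottom.above (single hW (sub_pos.mpr hh))
  rwa [add_sub_cancel, add_assoc, Multiset.singleton_add] at box

theorem strictPairGen_of_exchange {w h W' H' : ℝ} (hS : HasTiling w h S) (hT : HasTiling w h T)
    (hw : w < W) (hh : h < H) (right_strip : HasTiling W' H S) (top_strip : HasTiling W H' T) :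
    StrictPairGen W (H + H') (W + W') H (S.card + T.card + 2) := by
  have tall := (hS.extend_corner hw hh).above top_strip
  have wide := (hT.extend_corner hw hh).beside right_strip
  rw [add_right_comm] at tall
  rw [add_right_comm, add_comm T] at wide
  simpa using tall.strictPairGen wide

end HasTiling

theorem strictPair_one_two : StrictPair 1 2 4 := by
  have half : HasTiling 1 (1 / 2) {(1, 1 / 2)} := .single one_pos one_half_pos
  have tall : HasTiling 1 2 (4 • {(1, 1 / 2)}) := by
    convert half.nsmul_above (n := 4) (by norm_num) using 1
    norm_num
  have wide : HasTiling 2 1 (4 • {(1, 1 / 2)}) := by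
    convert (half.nsmul_above one_le_two).nsmul_beside one_le_two using 1
    · norm_num
    · norm_num
    · rw [smul_smul]
      norm_num
  simpa [StrictPair] using tall.strictPairGen wide

theorem strictPair_sq_of_two_le {r : ℕ} (hr : 2 ≤ r) :
    StrictPair ((r * r : ℕ) : ℝ) ((r * r : ℕ) + 1) (2 * r + 2) := by
  have hr_one : 1 ≤ r := one_le_two.trans hr
  have hr_pos : (0 : ℝ) < r := by positivity
  have hr_lt : (r : ℝ) < (r * r : ℕ) := mod_cast lt_mul_self hr
  have column : HasTiling 1 (r : ℝ) {(1, (r : ℝ))} := .single one_pos hr_pos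
  have row : HasTiling (r : ℝ) 1 {((r : ℝ), 1)} := .single hr_pos one_pos
  have columns_tile_corner := column.nsmul_beside hr_one
  have rows_tile_corner := row.nsmul_above hr_one
  have columns_tile_strip := column.nsmul_above hr_one
  have rows_tile_strip := row.nsmul_beside hr_one
  rw [mul_one] at columns_tile_corner rows_tile_corner
  rw [← Nat.cast_mul] at columns_tile_strip rows_tile_strip
  simpa [StrictPair, two_mul] using columns_tile_corner.strictPairGen_of_exchange rows_tile_corner
    hr_lt hr_lt columns_tile_strip rows_tile_strip

/-- If `p = r²` is a perfect square, `SIRTP(p, p+1)` has a solution of size `2√p + 2`. -/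
theorem sirtp_square_transfer_perfect_square (p r : ℕ) (hp : 0 < p) (hr : r * r = p) :
    StrictPair (p : ℝ) ((p : ℝ) + 1) (2 * r + 2) := by
  subst hr
  obtain rfl | two_le : r = 1 ∨ 2 ≤ r := by
    have : 0 < r := Nat.pos_of_mul_pos_left hp
    omega
  · norm_num [strictPair_one_two]
  · exact strictPair_sq_of_two_le two_le
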